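/- Let β > 0 and let u be a pair potential that is stable with constant B ≥ 0 and regular, and set C = C_β(u) > 0. Let M ≥ 0 and let θ^{(k)} : (ℝ^d)^k → ℂ (k ≥ 1) be measurable functions with |θ^{(k)}(·)| ≤ M·C^{−k} pointwise for every k. Fix n ≥ 2 and x_1,…,x_n ∈ ℝ^d, let i ∈ {1,…,n} be an index with Σ_{j≠i} u(x_j − x_i) ≥ −2B, and let x' denote the (n−1)-tuple obtained from (x_1,…,x_n) by deleting x_i. Then the series Σ_{k≥1} (1/k!) ∫_{(ℝ^d)^k} Π_{j=1}^k f_β(x_i − y_j) · θ^{(n−1+k)}(x', y_1,…,y_k) dy_1⋯dy_k converges absolutely, and | e^{−β Σ_{j≠i} u(x_j − x_i)} ( θ^{(n−1)}(x') + Σ_{k≥1} (1/k!) ∫_{(ℝ^d)^k} Π_{j=1}^k f_β(x_i − y_j) · θ^{(n−1+k)}(x', y_1,…,y_k) dy_1⋯dy_k ) | ≤ e^{2βB+1} · C^{1−n} · M. (This is the pointwise form of the operator-norm bound ‖ΠK‖ ≤ e^{2βB+1} C_β(u) for the Kirkwood–Salsburg operator composed with the permutation operator.) -/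

import Mathlib

open MeasureTheory Bornology

noncomputable section

/-- Boltzmann factor `e^{-β t}` with the convention `e^{-β(+∞)} = 0`. -/
def boltz (β : ℝ) (t : EReal) : ℝ :=
  if t = ⊤ then 0 else Real.exp (-β * t.toReal)

/-- Hamiltonian of a pair potential: `H(x₁,…,xₙ) = ∑_{i<j} u(xᵢ - xⱼ)`. -/
def Ham {d : ℕ} (u : (Fin d → ℝ) → EReal) (n : ℕ) (x : Fin n → (Fin d → ℝ)) : EReal :=
  ∑ p ∈ Finset.univ.filter (fun p : Fin n × Fin n => p.1 < p.2), u (x p.1 - x p.2)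

/-- A pair potential: even, measurable, bounded from below. -/
def IsPairPotential {d : ℕ} (u : (Fin d → ℝ) → EReal) : Prop :=
  Measurable u ∧ (∀ x, u (-x) = u x) ∧ ∃ m : ℝ, ∀ x, (m : EReal) ≤ u x

/-- Stability with constant `B`: `H(x₁,…,xₙ) ≥ -Bn`. -/
def IsStable {d : ℕ} (u : (Fin d → ℝ) → EReal) (B : ℝ) : Prop :=
  ∀ (n : ℕ) (x : Fin n → (Fin d → ℝ)), ((-(B * n) : ℝ) : EReal) ≤ Ham u n x

/-- Mayer function `f_β = e^{-βu} - 1`. -/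
def mayer {d : ℕ} (β : ℝ) (u : (Fin d → ℝ) → EReal) (x : Fin d → ℝ) : ℝ :=
  boltz β (u x) - 1

/-- Regularity: the Mayer function is integrable. -/
def IsRegularPP {d : ℕ} (β : ℝ) (u : (Fin d → ℝ) → EReal) : Prop :=
  Integrable (mayer β u)

/-- `C_β(u) = ∫ |e^{-βu} - 1|`. -/
def Creg {d : ℕ} (β : ℝ) (u : (Fin d → ℝ) → EReal) : ℝ :=
  ∫ x, |mayer β u x|

/-- The cartesian power `Λ^k`. -/
def cube {d : ℕ} (Λ : Set (Fin d → ℝ)) (k : ℕ) : Set (Fin k → (Fin d → ℝ)) :=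
  Set.univ.pi fun _ => Λ

/-- Grand canonical partition function `Ξ_Λ(z)`. -/
def Xi {d : ℕ} (β : ℝ) (u : (Fin d → ℝ) → EReal) (Λ : Set (Fin d → ℝ)) (z : ℂ) : ℂ :=
  ∑' k : ℕ, z ^ k / (Nat.factorial k : ℂ) *
    ((∫ y in cube Λ k, boltz β (Ham u k y) : ℝ) : ℂ)

/-- `θ_Λ^{(n)}(z; x₁,…,xₙ)`. -/
def theta {d : ℕ} (β : ℝ) (u : (Fin d → ℝ) → EReal) (Λ : Set (Fin d → ℝ)) (n : ℕ)
    (z : ℂ) (x : Fin n → (Fin d → ℝ)) : ℂ :=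
  (Xi β u Λ z)⁻¹ * ∑' k : ℕ, z ^ (n + k) / (Nat.factorial k : ℂ) *
    ((∫ y in cube Λ k, boltz β (Ham u (n + k) (Fin.append x y)) : ℝ) : ℂ)

end

/-!
The factor `e^{-β ∑ u}` is at most `e^{2βB}` by the choice of `i`. By Fubini the product of `k`
Mayer functions has `L¹` norm `C ^ k`, which cancels the extra decay `C ^ (-k)` of
`θ^{(n-1+k)}` relative to `θ^{(n-1)}`. So the `k`-th term, `k = 0` included, is at most
`M C ^ (1 - n) / k!`, and summing over `k` gives the remaining factor `e`.
-/

theorem boltz_nonneg (β : ℝ) (t : EReal) : 0 ≤ boltz β t := by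
  unfold boltz
  split_ifs <;> positivity

theorem boltz_le_exp {β s : ℝ} {t : EReal} (hβ : 0 ≤ β) (hst : (s : EReal) ≤ t) :
    boltz β t ≤ Real.exp (-β * s) := by
  unfold boltz
  split_ifs with ht
  · positivity
  · have hs : s ≤ t.toReal := EReal.toReal_le_toReal hst (EReal.coe_ne_bot s) ht
    exact Real.exp_le_exp.2 (mul_le_mul_of_nonpos_left hs (neg_nonpos.2 hβ))

theorem hasSum_one_div_factorial_succ :
    HasSum (fun k : ℕ => 1 / (Nat.factorial (k + 1) : ℝ)) (Real.exp 1 - 1) := by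
  have hexp : HasSum (fun k : ℕ => (1 : ℝ) ^ k / (Nat.factorial k : ℝ)) (Real.exp 1) := by
    rw [Real.exp_eq_exp_ℝ]
    exact NormedSpace.expSeries_div_hasSum_exp (1 : ℝ)
  simpa using (hasSum_nat_add_iff' 1).2 hexp

theorem norm_add_tsum_le_exp_one_mul {E : Type*} [SeminormedAddCommGroup E] {v : E}
    {a : ℕ → E} {K : ℝ} (hv : ‖v‖ ≤ K)
    (ha : ∀ k, ‖a k‖ ≤ 1 / (Nat.factorial (k + 1) : ℝ) * K) :
    ‖v + ∑' k, a k‖ ≤ Real.exp 1 * K :=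
  calc ‖v + ∑' k, a k‖ ≤ ‖v‖ + ‖∑' k, a k‖ := norm_add_le _ _
    _ ≤ K + (Real.exp 1 - 1) * K :=
      add_le_add hv (tsum_of_norm_bounded (hasSum_one_div_factorial_succ.mul_right K) ha)
    _ = Real.exp 1 * K := by ring

theorem measurable_append_right {α : Type*} [MeasurableSpace α] {m n : ℕ} (x : Fin m → α) :
    Measurable fun y : Fin n → α => Fin.append x y := by
  refine measurable_pi_lambda _ fun j => ?_
  refine Fin.addCases (fun l => ?_) (fun l => ?_) j
  · simp only [Fin.append_left, measurable_const]
  · simpa only [Fin.append_right] using measurable_pi_apply l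

section ProductWeight

variable {ι : Type*} [Fintype ι] {X : ι → Type*} [∀ i, MeasurableSpace (X i)]
  {μ : ∀ i, Measure (X i)} [∀ i, SigmaFinite (μ i)]
  {𝕜 E : Type*} [RCLike 𝕜] [NormedAddCommGroup E] [NormedSpace 𝕜 E]
  {f : ∀ i, X i → 𝕜} {g : (∀ i, X i) → E} {K : ℝ}

theorem integrable_prod_smul_of_bounded (hf : ∀ i, Integrable (f i) (μ i))
    (hg : AEStronglyMeasurable g (Measure.pi μ)) (hgK : ∀ y, ‖g y‖ ≤ K) :
    Integrable (fun y => (∏ i, f i (y i)) • g y) (Measure.pi μ) :=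
  (Integrable.fintype_prod_dep hf).smul_bdd K hg (Filter.Eventually.of_forall hgK)

theorem norm_integral_prod_smul_le [NormedSpace ℝ E] (hf : ∀ i, Integrable (f i) (μ i))
    (hgK : ∀ y, ‖g y‖ ≤ K) :
    ‖∫ y, (∏ i, f i (y i)) • g y ∂Measure.pi μ‖ ≤ (∏ i, ∫ y, ‖f i y‖ ∂μ i) * K := by
  have hdom : Integrable (fun y => (∏ i, ‖f i (y i)‖) * K) (Measure.pi μ) :=
    (Integrable.fintype_prod_dep fun i => (hf i).norm).mul_const K
  have hle (y : ∀ i, X i) : ‖(∏ i, f i (y i)) • g y‖ ≤ (∏ i, ‖f i (y i)‖) * K := by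
    rw [norm_smul, norm_prod]
    gcongr
    exact hgK y
  calc ‖∫ y, (∏ i, f i (y i)) • g y ∂Measure.pi μ‖
      ≤ ∫ y, (∏ i, ‖f i (y i)‖) * K ∂Measure.pi μ :=
        norm_integral_le_of_norm_le hdom (Filter.Eventually.of_forall hle)
    _ = (∏ i, ∫ y, ‖f i y‖ ∂μ i) * K := by
        rw [integral_mul_const, integral_fintype_prod_eq_prod fun i y => ‖f i y‖]

end ProductWeight

section KirkwoodSalsburg

variable {G : Type*} [AddGroup G] [MeasurableSpace G] {𝕜 E : Type*} [RCLike 𝕜]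
  [NormedAddCommGroup E] [NormedSpace 𝕜 E]

/-- The integrand `∏ⱼ f (a - yⱼ) θ^{(n+k)}(x, y₁, …, yₖ)` of the `k`-th Kirkwood–Salsburg term.
An arbitrary function `f` takes the place of the Mayer function, the point `a` that of the
deleted particle, and `x` is the tuple of the `n` remaining ones. -/
def kirkwoodSalsburgIntegrand (f : G → 𝕜) (θ : ∀ k, (Fin k → G) → E) (a : G) {n : ℕ}
    (x : Fin n → G) (k : ℕ) (y : Fin k → G) : E :=
  (∏ j, f (a - y j)) • θ (n + k) (Fin.append x y)

/-- The `k`-th term of the Kirkwood–Salsburg series, with respect to a reference measure `μ`. -/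
noncomputable def kirkwoodSalsburgTerm [NormedSpace ℝ E] (μ : Measure G) (f : G → 𝕜)
    (θ : ∀ k, (Fin k → G) → E) (a : G) {n : ℕ} (x : Fin n → G) (k : ℕ) : E :=
  (1 / (Nat.factorial k : 𝕜)) •
    ∫ y, kirkwoodSalsburgIntegrand f θ a x k y ∂Measure.pi fun _ => μ

variable [MeasurableAdd G] [MeasurableNeg G] {μ : Measure G} [SigmaFinite μ]
  [μ.IsAddLeftInvariant] [μ.IsNegInvariant] {f : G → 𝕜} {θ : ∀ k, (Fin k → G) → E} {C M : ℝ}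
  {n : ℕ}

theorem integrable_kirkwoodSalsburgIntegrand (hf : Integrable f μ) {k : ℕ}
    (hθmeas : StronglyMeasurable (θ (n + k))) {K : ℝ} (hθ : ∀ y, ‖θ (n + k) y‖ ≤ K)
    (a : G) (x : Fin n → G) :
    Integrable (kirkwoodSalsburgIntegrand f θ a x k) (Measure.pi fun _ => μ) :=
  integrable_prod_smul_of_bounded (fun _ => hf.comp_sub_left a)
    (hθmeas.comp_measurable (measurable_append_right x)).aestronglyMeasurable fun _ => hθ _

variable [NormedSpace ℝ E]

theorem norm_integral_kirkwoodSalsburgIntegrand_le (hf : Integrable f μ) (hC : 0 < C)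
    (hfC : ∫ y, ‖f y‖ ∂μ ≤ C) (hθ : ∀ k y, ‖θ k y‖ ≤ M / C ^ k)
    (a : G) (x : Fin n → G) (k : ℕ) :
    ‖∫ y, kirkwoodSalsburgIntegrand f θ a x k y ∂Measure.pi fun _ => μ‖ ≤ M / C ^ n := by
  have hbound_nonneg : 0 ≤ M / C ^ (n + k) :=
    (norm_nonneg _).trans (hθ (n + k) fun _ => a)
  calc ‖∫ y, kirkwoodSalsburgIntegrand f θ a x k y ∂Measure.pi fun _ => μ‖
      ≤ (∏ _j : Fin k, ∫ y, ‖f (a - y)‖ ∂μ) * (M / C ^ (n + k)) :=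
        norm_integral_prod_smul_le (fun _ => hf.comp_sub_left a) fun _ => hθ _ _
    _ = (∫ y, ‖f y‖ ∂μ) ^ k * (M / C ^ (n + k)) := by
        rw [integral_sub_left_eq_self (fun y => ‖f y‖) μ a, Finset.prod_const, Finset.card_univ,
          Fintype.card_fin]
    _ ≤ C ^ k * (M / C ^ (n + k)) := by gcongr
    _ = M / C ^ n := by
        rw [pow_add]
        field_simp

theorem norm_kirkwoodSalsburgTerm_le (hf : Integrable f μ) (hC : 0 < C)
    (hfC : ∫ y, ‖f y‖ ∂μ ≤ C) (hθ : ∀ k y, ‖θ k y‖ ≤ M / C ^ k)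
    (a : G) (x : Fin n → G) (k : ℕ) :
    ‖kirkwoodSalsburgTerm μ f θ a x k‖ ≤ 1 / (Nat.factorial k : ℝ) * (M / C ^ n) := by
  rw [kirkwoodSalsburgTerm, norm_smul, norm_div, norm_one, RCLike.norm_natCast]
  gcongr
  exact norm_integral_kirkwoodSalsburgIntegrand_le hf hC hfC hθ a x k

theorem summable_norm_kirkwoodSalsburgTerm_succ (hf : Integrable f μ) (hC : 0 < C)
    (hfC : ∫ y, ‖f y‖ ∂μ ≤ C) (hθ : ∀ k y, ‖θ k y‖ ≤ M / C ^ k) (a : G) (x : Fin n → G) :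
    Summable fun k : ℕ => ‖kirkwoodSalsburgTerm μ f θ a x (k + 1)‖ :=
  Summable.of_nonneg_of_le (fun _ => norm_nonneg _)
    (fun k => norm_kirkwoodSalsburgTerm_le hf hC hfC hθ a x (k + 1))
    (hasSum_one_div_factorial_succ.mul_right (M / C ^ n)).summable

theorem norm_add_tsum_kirkwoodSalsburgTerm_le (hf : Integrable f μ) (hC : 0 < C)
    (hfC : ∫ y, ‖f y‖ ∂μ ≤ C) (hθ : ∀ k y, ‖θ k y‖ ≤ M / C ^ k) (a : G) (x : Fin n → G) :
    ‖θ n x + ∑' k : ℕ, kirkwoodSalsburgTerm μ f θ a x (k + 1)‖ ≤ Real.exp 1 * (M / C ^ n) :=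
  norm_add_tsum_le_exp_one_mul (hθ n x) fun k =>
    norm_kirkwoodSalsburgTerm_le hf hC hfC hθ a x (k + 1)

end KirkwoodSalsburg

/-- Here `f` stands for the Mayer function and `t` for the interaction energy `∑_{j≠i} u(xⱼ - xᵢ)`
of the deleted particle with the others. -/
theorem statement10_general {G : Type*} [AddGroup G] [MeasurableSpace G] [MeasurableAdd G]
    [MeasurableNeg G] {μ : Measure G} [SigmaFinite μ] [μ.IsAddLeftInvariant] [μ.IsNegInvariant]
    {β B C M : ℝ} (hβ : 0 ≤ β) {t : EReal} (ht : ((-(2 * B) : ℝ) : EReal) ≤ t)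
    {f : G → ℂ} (hf : Integrable f μ) (hC : 0 < C) (hfC : ∫ y, ‖f y‖ ∂μ ≤ C)
    {θ : ∀ k : ℕ, (Fin k → G) → ℂ} (hθmeas : ∀ k, Measurable (θ k))
    (hθ : ∀ k y, ‖θ k y‖ ≤ M / C ^ k) {n : ℕ} (a : G) (x : Fin n → G) :
    (∀ k, Integrable (kirkwoodSalsburgIntegrand f θ a x k) (Measure.pi fun _ => μ)) ∧
    (Summable fun k : ℕ => ‖kirkwoodSalsburgTerm μ f θ a x (k + 1)‖) ∧
    ‖(boltz β t : ℂ) * (θ n x + ∑' k : ℕ, kirkwoodSalsburgTerm μ f θ a x (k + 1))‖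
      ≤ Real.exp (2 * β * B + 1) * M / C ^ n := by
  refine ⟨fun k => integrable_kirkwoodSalsburgIntegrand hf (hθmeas _).stronglyMeasurable
    (hθ _) a x, summable_norm_kirkwoodSalsburgTerm_succ hf hC hfC hθ a x, ?_⟩
  rw [norm_mul, Complex.norm_of_nonneg (boltz_nonneg β t)]
  calc boltz β t * ‖θ n x + ∑' k : ℕ, kirkwoodSalsburgTerm μ f θ a x (k + 1)‖
      ≤ Real.exp (-β * -(2 * B)) * (Real.exp 1 * (M / C ^ n)) := by
        gcongr
        · exact boltz_le_exp hβ ht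
        · exact norm_add_tsum_kirkwoodSalsburgTerm_le hf hC hfC hθ a x
    _ = Real.exp (2 * β * B + 1) * M / C ^ n := by
        rw [show -β * -(2 * B) = 2 * β * B by ring, Real.exp_add]
        ring

/-- pointwise operator-norm bound `‖ΠK‖ ≤ e^{2βB+1} C_β(u)` for the
Kirkwood–Salsburg operator: if `‖θ^{(k)}‖ ≤ M C^{-k}` for all `k` and `i` is an index
with `Σ_{j≠i} u(x_j - x_i) ≥ -2B` (here `n = m + 2 ≥ 2`, and `x ∘ i.succAbove` is the
tuple with `x_i` deleted), then the Kirkwood–Salsburg series converges absolutely and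
the stated bound `e^{2βB+1} C^{1-n} M = e^{2βB+1} M / C^{m+1}` holds. -/
theorem statement10 {d : ℕ} (hd : 1 ≤ d) (β B : ℝ) (hβ : 0 < β) (hB : 0 ≤ B)
    (u : (Fin d → ℝ) → EReal) (hu : IsPairPotential u)
    (hstab : IsStable u B) (hreg : IsRegularPP β u) (hC : 0 < Creg β u)
    (M : ℝ) (hM : 0 ≤ M)
    (θ : ∀ k : ℕ, (Fin k → (Fin d → ℝ)) → ℂ)
    (hθmeas : ∀ k, Measurable (θ k))
    (hθbd : ∀ (k : ℕ) (x : Fin k → (Fin d → ℝ)), ‖θ k x‖ ≤ M / Creg β u ^ k)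
    (m : ℕ) (x : Fin (m + 2) → (Fin d → ℝ)) (i : Fin (m + 2))
    (hi : ((-(2 * B) : ℝ) : EReal) ≤ ∑ j ∈ Finset.univ.erase i, u (x j - x i)) :
    Summable (fun k : ℕ =>
      ‖(1 / (Nat.factorial (k + 1) : ℂ)) *
        ∫ y : Fin (k + 1) → (Fin d → ℝ),
          (∏ j, ((mayer β u (x i - y j) : ℝ) : ℂ)) *
            θ (m + 1 + (k + 1)) (Fin.append (x ∘ i.succAbove) y)‖) ∧
    ‖((boltz β (∑ j ∈ Finset.univ.erase i, u (x j - x i)) : ℝ) : ℂ) *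
        (θ (m + 1) (x ∘ i.succAbove) +
          ∑' k : ℕ, (1 / (Nat.factorial (k + 1) : ℂ)) *
            ∫ y : Fin (k + 1) → (Fin d → ℝ),
              (∏ j, ((mayer β u (x i - y j) : ℝ) : ℂ)) *
                θ (m + 1 + (k + 1)) (Fin.append (x ∘ i.succAbove) y))‖
      ≤ Real.exp (2 * β * B + 1) * M / Creg β u ^ (m + 1) := by
  have hfC : ∫ y, ‖(mayer β u y : ℂ)‖ ≤ Creg β u := by
    simp only [Complex.norm_real, Real.norm_eq_abs, Creg, le_refl]
  exact (statement10_general hβ.le hi hreg.ofReal hC hfC hθmeas hθbd (x i) (x ∘ i.succAbove)).2
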